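/- Let f : ℝ² → ℝ be continuously differentiable and 2π-periodic in each variable, with zero mean: ∫_{[0,2π]²} f(x1,x2) dx1 dx2 = 0. Let I(x1,x2) = (2π − x1, π + x2). Suppose that (∂f/∂x1)(I(x)) = (∂f/∂x1)(x) and (∂f/∂x2)(I(x)) = −(∂f/∂x2)(x) for all x ∈ ℝ² (equivalently, the Hamiltonian vector field v_f = (∂₂f, −∂₁f) satisfies dI ∘ v_f = v_f ∘ I). Then f(I(x)) = −f(x) for all x ∈ ℝ². -/

import Mathlib

/-!
Write `I` for the glide reflection of the plane that covers the involution. The hypotheses on the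
partial derivatives say that `f ∘ I + f` has zero derivative, so it is a constant `c`. The half
`[0, 2π] × [0, π]` of the square `[0, 2π]²` is a fundamental domain of the Klein bottle: its image
under `I` is the other half. Hence the integral of `f` over the square equals the integral of
`f ∘ I + f = c` over the half, and a zero mean forces `c = 0`.
-/

/-- Partial derivative in the first variable. -/
noncomputable def pd1 (f : ℝ × ℝ → ℝ) (x : ℝ × ℝ) : ℝ := fderiv ℝ f x (1, 0)

/-- Partial derivative in the second variable. -/
noncomputable def pd2 (f : ℝ × ℝ → ℝ) (x : ℝ × ℝ) : ℝ := fderiv ℝ f x (0, 1)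

/-- The glide reflection of the plane that reflects the first coordinate in `a / 2` and translates
the second one by `s`. For `a = 2 * π` and `s = π` it is the lift to the plane of the involution of
the torus whose quotient is the Klein bottle. -/
def glideReflection (a s : ℝ) (p : ℝ × ℝ) : ℝ × ℝ := (a - p.1, s + p.2)

section GlideReflection

open intervalIntegral

variable {E : Type*} [NormedAddCommGroup E] [NormedSpace ℝ E] {f : ℝ × ℝ → E} {a s : ℝ}

theorem hasFDerivAt_glideReflection (a s : ℝ) (p : ℝ × ℝ) :
    HasFDerivAt (glideReflection a s)
      ((-ContinuousLinearMap.fst ℝ ℝ ℝ).prod (ContinuousLinearMap.snd ℝ ℝ ℝ)) p :=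
  (hasFDerivAt_fst.const_sub a).prodMk (hasFDerivAt_snd.const_add s)

theorem continuous_glideReflection (a s : ℝ) : Continuous (glideReflection a s) := by
  unfold glideReflection
  fun_prop

theorem hasFDerivAt_comp_glideReflection_add {p : ℝ × ℝ}
    (hfI : DifferentiableAt ℝ f (glideReflection a s p)) (hf : DifferentiableAt ℝ f p)
    (hfst : fderiv ℝ f (glideReflection a s p) (1, 0) = fderiv ℝ f p (1, 0))
    (hsnd : fderiv ℝ f (glideReflection a s p) (0, 1) = -fderiv ℝ f p (0, 1)) :
    HasFDerivAt (fun q => f (glideReflection a s q) + f q) (0 : ℝ × ℝ →L[ℝ] E) p := by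
  have hsum := (hfI.hasFDerivAt.comp p (hasFDerivAt_glideReflection a s p)).add hf.hasFDerivAt
  have hneg : fderiv ℝ f (glideReflection a s p) (-1, 0) = -fderiv ℝ f p (1, 0) := by
    rw [← hfst, ← map_neg, Prod.neg_mk, neg_zero]
  refine hsum.congr_fderiv ?_
  ext <;> simp [hneg, hsnd]

theorem exists_comp_glideReflection_add_eq_const (hf : Differentiable ℝ f)
    (hfst : ∀ p, fderiv ℝ f (glideReflection a s p) (1, 0) = fderiv ℝ f p (1, 0))
    (hsnd : ∀ p, fderiv ℝ f (glideReflection a s p) (0, 1) = -fderiv ℝ f p (0, 1)) :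
    ∃ c, ∀ p, f (glideReflection a s p) + f p = c := by
  have hderiv p := hasFDerivAt_comp_glideReflection_add (hf _) (hf p) (hfst p) (hsnd p)
  exact ⟨_, fun p => is_const_of_fderiv_eq_zero (fun q => (hderiv q).differentiableAt)
    (fun q => (hderiv q).fderiv) p 0⟩

theorem integral_comp_glideReflection (f : ℝ × ℝ → E) (a s : ℝ) :
    (∫ x in (0 : ℝ)..a, ∫ y in (0 : ℝ)..s, f (glideReflection a s (x, y))) =
      ∫ x in (0 : ℝ)..a, ∫ y in s..2 * s, f (x, y) := by
  calc (∫ x in (0 : ℝ)..a, ∫ y in (0 : ℝ)..s, f (a - x, s + y))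
      = ∫ x in (0 : ℝ)..a, ∫ y in s..2 * s, f (a - x, y) := by
        refine integral_congr fun x _ => ?_
        simpa only [add_zero, two_mul] using
          integral_comp_add_left (a := 0) (b := s) (fun y => f (a - x, y)) s
    _ = ∫ x in (0 : ℝ)..a, ∫ y in s..2 * s, f (x, y) := by
        rw [integral_comp_sub_left (fun x => ∫ y in s..2 * s, f (x, y)), sub_self, sub_zero]

theorem integral_comp_glideReflection_add (hf : Continuous f) (a s : ℝ) :
    (∫ x in (0 : ℝ)..a, ∫ y in (0 : ℝ)..s, (f (glideReflection a s (x, y)) + f (x, y))) =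
      ∫ x in (0 : ℝ)..a, ∫ y in (0 : ℝ)..2 * s, f (x, y) := by
  have hslice {g : ℝ × ℝ → E} (hg : Continuous g) (x b c : ℝ) :
      IntervalIntegrable (fun y => g (x, y)) MeasureTheory.volume b c :=
    (hg.comp (.prodMk_right x)).intervalIntegrable b c
  have houter {g : ℝ × ℝ → E} (hg : Continuous g) (b c : ℝ) :
      IntervalIntegrable (fun x => ∫ y in b..c, g (x, y)) MeasureTheory.volume 0 a :=
    (continuous_parametric_intervalIntegral_of_continuous' (f := fun x y => g (x, y)) hg
      b c).intervalIntegrable 0 a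
  have hfI : Continuous fun p => f (glideReflection a s p) :=
    hf.comp (continuous_glideReflection a s)
  calc (∫ x in (0 : ℝ)..a, ∫ y in (0 : ℝ)..s, (f (glideReflection a s (x, y)) + f (x, y)))
      = (∫ x in (0 : ℝ)..a, ∫ y in (0 : ℝ)..s, f (glideReflection a s (x, y))) +
          ∫ x in (0 : ℝ)..a, ∫ y in (0 : ℝ)..s, f (x, y) := by
        simp only [integral_add (hslice hfI _ _ _) (hslice hf _ _ _)]
        exact integral_add (houter hfI 0 s) (houter hf 0 s)
    _ = (∫ x in (0 : ℝ)..a, ∫ y in (0 : ℝ)..s, f (x, y)) +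
          ∫ x in (0 : ℝ)..a, ∫ y in s..2 * s, f (x, y) := by
        rw [integral_comp_glideReflection, add_comm]
    _ = ∫ x in (0 : ℝ)..a, ∫ y in (0 : ℝ)..2 * s, f (x, y) := by
        rw [← integral_add (houter hf 0 s) (houter hf s (2 * s))]
        simp only [integral_add_adjacent_intervals (hslice hf _ _ _) (hslice hf _ _ _)]

theorem invariant_field_antiinvariant_stream_general [CompleteSpace E]
    (ha : a ≠ 0) (hs : s ≠ 0) (hf : Differentiable ℝ f)
    (hmean : (∫ x in (0 : ℝ)..a, ∫ y in (0 : ℝ)..2 * s, f (x, y)) = 0)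
    (hfst : ∀ p, fderiv ℝ f (glideReflection a s p) (1, 0) = fderiv ℝ f p (1, 0))
    (hsnd : ∀ p, fderiv ℝ f (glideReflection a s p) (0, 1) = -fderiv ℝ f p (0, 1))
    (p : ℝ × ℝ) :
    f (glideReflection a s p) = -f p := by
  obtain ⟨c, hc⟩ := exists_comp_glideReflection_add_eq_const hf hfst hsnd
  have hint : a • s • c = 0 := by
    simpa only [hc, hmean, integral_const, sub_zero] using
      integral_comp_glideReflection_add hf.continuous a s
  have hc0 : c = 0 := by simpa [ha, hs] using hint
  exact eq_neg_of_add_eq_zero_left ((hc p).trans hc0)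

end GlideReflection

theorem invariant_field_antiinvariant_stream
    (f : ℝ × ℝ → ℝ) (hf : ContDiff ℝ 1 f)
    (hper : ∀ x : ℝ × ℝ, f (x.1 + 2 * Real.pi, x.2) = f x ∧ f (x.1, x.2 + 2 * Real.pi) = f x)
    (hmean : (∫ x in (0 : ℝ)..(2 * Real.pi), ∫ y in (0 : ℝ)..(2 * Real.pi), f (x, y)) = 0)
    (h1 : ∀ x : ℝ × ℝ, pd1 f (2 * Real.pi - x.1, Real.pi + x.2) = pd1 f x)
    (h2 : ∀ x : ℝ × ℝ, pd2 f (2 * Real.pi - x.1, Real.pi + x.2) = -pd2 f x) :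
    ∀ x : ℝ × ℝ, f (2 * Real.pi - x.1, Real.pi + x.2) = -f x :=
  invariant_field_antiinvariant_stream_general Real.two_pi_pos.ne' Real.pi_ne_zero
    (hf.differentiable one_ne_zero) hmean h1 h2
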